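/- Let c, d > 2, n = c+d, and let J ⊆ ℂ[S_{αβ}, S_κ, S_{γδ}] be the ideal generated by the Plücker-type relations S_{ij}S_{kl} − S_{ik}S_{jl} + S_{il}S_{jk} for i<j<k<l ≤ c, S_{ij}S_k − S_{ik}S_j + S_iS_{jk} for i<j<k ≤ c, S_jS_{kl} − S_kS_{jl} + S_lS_{jk} for c+1 ≤ j<k<l, and S_{ij}S_{kl} − S_{ik}S_{jl} + S_{il}S_{jk} for c+1 ≤ i<j<k<l. Then ℂ[S]/J is isomorphic to the tensor product over ℂ of the homogeneous coordinate rings of the Grassmannians G(2,c+1) and G(2,d+1), and in particular is an integral domain. -/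

import Mathlib

set_option synthInstance.maxHeartbeats 800000
set_option maxHeartbeats 2000000

open MvPolynomial

/-- Index set for pairs `i < j` in `Fin n`. -/
abbrev PIdx (n : ℕ) := {p : Fin n × Fin n // p.1 < p.2}

/-- Index set for the variables of `B`: pair variables `S_{αβ}` (`α < β ≤ c`) and
`S_{γδ}` (`c + 1 ≤ γ < δ`), indexed by pairs lying inside `{1,…,c}` or inside
`{c+1,…,n}`, together with the single variables `S_κ`, `1 ≤ κ ≤ n`. -/
abbrev BVar (c n : ℕ) :=
  {p : PIdx n // p.val.2.val < c ∨ c ≤ p.val.1.val} ⊕ Fin n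

/-- The pair variable `S_{ij}`. -/
noncomputable def SP {c n : ℕ} (i j : Fin n) (hij : i < j)
    (h : j.val < c ∨ c ≤ i.val) : MvPolynomial (BVar c n) ℂ :=
  X (Sum.inl ⟨⟨(i, j), hij⟩, h⟩)

/-- The single variable `S_κ`. -/
noncomputable def S1 {c n : ℕ} (κ : Fin n) : MvPolynomial (BVar c n) ℂ :=
  X (Sum.inr κ)

/-- The Plücker-type relations generating the ideal `𝔟 ⊆ B`:
`S_{ij}S_{kl} - S_{ik}S_{jl} + S_{il}S_{jk}` for `i < j < k < l ≤ c`,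
`S_{ij}S_k - S_{ik}S_j + S_iS_{jk}` for `i < j < k ≤ c`,
`S_jS_{kl} - S_kS_{jl} + S_lS_{jk}` for `c + 1 ≤ j < k < l`, and
`S_{ij}S_{kl} - S_{ik}S_{jl} + S_{il}S_{jk}` for `c + 1 ≤ i < j < k < l`. -/
def relSet (c n : ℕ) : Set (MvPolynomial (BVar c n) ℂ) :=
  {P |
    (∃ (i j k l : Fin n) (hij : i < j) (hjk : j < k) (hkl : k < l) (h : l.val < c),
      P = SP i j hij (Or.inl (by have := Fin.lt_def.mp ((hjk.trans hkl)); omega)) *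
            SP k l hkl (Or.inl (by omega)) -
          SP i k (hij.trans hjk) (Or.inl (by have := Fin.lt_def.mp hkl; omega)) *
            SP j l (hjk.trans hkl) (Or.inl (by omega)) +
          SP i l (hij.trans (hjk.trans hkl)) (Or.inl (by omega)) *
            SP j k hjk (Or.inl (by have := Fin.lt_def.mp hkl; omega))) ∨
    (∃ (i j k : Fin n) (hij : i < j) (hjk : j < k) (h : k.val < c),
      P = SP i j hij (Or.inl (by have := Fin.lt_def.mp hjk; omega)) * S1 k -
          SP i k (hij.trans hjk) (Or.inl (by omega)) * S1 j +
          S1 i * SP j k hjk (Or.inl (by omega))) ∨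
    (∃ (j k l : Fin n) (hjk : j < k) (hkl : k < l) (h : c ≤ j.val),
      P = S1 j * SP k l hkl (Or.inr (by have := Fin.lt_def.mp hjk; omega)) -
          S1 k * SP j l (hjk.trans hkl) (Or.inr (by omega)) +
          S1 l * SP j k hjk (Or.inr (by omega))) ∨
    (∃ (i j k l : Fin n) (hij : i < j) (hjk : j < k) (hkl : k < l) (h : c ≤ i.val),
      P = SP i j hij (Or.inr (by omega)) *
            SP k l hkl (Or.inr (by
              have h1 := Fin.lt_def.mp hij; have h2 := Fin.lt_def.mp hjk; omega)) -
          SP i k (hij.trans hjk) (Or.inr (by omega)) *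
            SP j l (hjk.trans hkl) (Or.inr (by have := Fin.lt_def.mp hij; omega)) +
          SP i l (hij.trans (hjk.trans hkl)) (Or.inr (by omega)) *
            SP j k hjk (Or.inr (by have := Fin.lt_def.mp hij; omega)))}

/-- The variable `T_{ij}` of the Plücker coordinate ring. -/
noncomputable def Tv {m : ℕ} (i j : Fin m) (h : i < j) : MvPolynomial (PIdx m) ℂ :=
  X ⟨(i, j), h⟩

/-- The set of Plücker relations for `G(2,m)`. -/
def pluckerSet (m : ℕ) : Set (MvPolynomial (PIdx m) ℂ) :=
  {P | ∃ (i j k l : Fin m) (hij : i < j) (hjk : j < k) (hkl : k < l),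
    P = Tv i j hij * Tv k l hkl - Tv i k (hij.trans hjk) * Tv j l (hjk.trans hkl)
          + Tv i l (hij.trans (hjk.trans hkl)) * Tv j k hjk}

/-- The homogeneous coordinate ring of the Grassmannian `G(2,m)`. -/
noncomputable abbrev GrRing (m : ℕ) :=
  MvPolynomial (PIdx m) ℂ ⧸ Ideal.span (pluckerSet m)

namespace MonomialOrder

variable {σ κ R : Type*} [CommRing R] (m : MonomialOrder σ)

/-- A nonempty sum of nonzero polynomials with pairwise distinct degrees is nonzero. -/
theorem sum_ne_zero_of_injOn_degree {S : Finset κ} (hS : S.Nonempty)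
    {P : κ → MvPolynomial σ R} (hP : ∀ s ∈ S, P s ≠ 0)
    (hinj : Set.InjOn (fun s => m.degree (P s)) S) : ∑ s ∈ S, P s ≠ 0 := by
  obtain ⟨s₀, hs₀, hmax⟩ := S.exists_max_image (fun s => m.toSyn (m.degree (P s))) hS
  intro h
  have hc := congrArg (coeff (m.degree (P s₀))) h
  rw [coeff_sum, Finset.sum_eq_single_of_mem s₀ hs₀, coeff_zero] at hc
  · exact m.coeff_degree_ne_zero_iff.mpr (hP s₀ hs₀) hc
  · intro s hs hne
    refine m.coeff_eq_zero_of_lt (lt_of_le_of_ne (hmax s hs) fun he => hne ?_)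
    exact hinj hs hs₀ (m.toSyn.injective he)

end MonomialOrder

namespace Plucker

variable {m : ℕ}

/-- The variables `x_i` (left) and `y_j` (right) of a generic `2 × m` matrix. -/
abbrev MatVar (m : ℕ) := Lex (Fin m ⊕ Fin m)

/-- The exponent of the diagonal term `x_i y_j` of a minor. -/
noncomputable def diagExp (p : PIdx m) : MatVar m →₀ ℕ :=
  Finsupp.single (toLex (.inl p.1.1)) 1 + Finsupp.single (toLex (.inr p.1.2)) 1

/-- The minor `x_i y_j - x_j y_i` of a generic `2 × m` matrix. -/
noncomputable def minor (p : PIdx m) : MvPolynomial (MatVar m) ℂ :=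
  X (toLex (.inl p.1.1)) * X (toLex (.inr p.1.2)) -
    X (toLex (.inl p.1.2)) * X (toLex (.inr p.1.1))

theorem degree_minor (p : PIdx m) : MonomialOrder.lex.degree (minor p) = diagExp p := by
  have hX : ∀ a b : MatVar m, MonomialOrder.lex.degree (X a * X b : MvPolynomial _ ℂ) =
      Finsupp.single a 1 + Finsupp.single b 1 := fun a b => by
    rw [MonomialOrder.degree_mul (X_ne_zero _) (X_ne_zero _), MonomialOrder.degree_X,
      MonomialOrder.degree_X]
  have hp := p.2
  rw [minor, MonomialOrder.degree_sub_of_lt, hX, diagExp]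
  rw [hX, hX, MonomialOrder.lex_lt_iff, Finsupp.Lex.lt_iff]
  refine ⟨toLex (.inl p.1.1), fun j hj => ?_, ?_⟩
  · have h1 : j ≠ toLex (.inl p.1.1) := hj.ne
    have h2 : j ≠ toLex (.inl p.1.2) := (hj.trans (Sum.Lex.inl_lt_inl_iff.mpr hp)).ne
    have h3 : ∀ k, j ≠ toLex (.inr k) := fun k => (hj.trans (Sum.Lex.inl_lt_inr _ _)).ne
    simp [h1.symm, h2.symm, (h3 _).symm]
  · simp [hp.ne']

theorem minor_ne_zero (p : PIdx m) : minor p ≠ 0 := by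
  refine MonomialOrder.lex.ne_zero_of_degree_ne_zero fun h => ?_
  rw [degree_minor] at h
  simpa [diagExp] using DFunLike.congr_fun h (toLex (.inl p.1.1))

/-- The exponent of the leading term of a monomial in the minors. -/
noncomputable def leadExp : (PIdx m →₀ ℕ) →+ (MatVar m →₀ ℕ) := Finsupp.weight diagExp

theorem leadExp_inl_ne_zero {s : PIdx m →₀ ℕ} {i : Fin m} :
    leadExp s (toLex (.inl i)) ≠ 0 ↔ ∃ p ∈ s.support, p.1.1 = i := by
  simp only [leadExp, Finsupp.weight_eq_sum, Finsupp.finsetSum_apply, diagExp]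
  simp [Finsupp.single_apply, -Subtype.exists, -Subtype.forall, and_comm]

theorem leadExp_inr_ne_zero {s : PIdx m →₀ ℕ} {i : Fin m} :
    leadExp s (toLex (.inr i)) ≠ 0 ↔ ∃ p ∈ s.support, p.1.2 = i := by
  simp only [leadExp, Finsupp.weight_eq_sum, Finsupp.finsetSum_apply, diagExp]
  simp [Finsupp.single_apply, -Subtype.exists, -Subtype.forall, and_comm]

/-- A monomial in the Plücker coordinates is standard if its support is a chain. -/
def IsStandard (s : PIdx m →₀ ℕ) : Prop := IsChain (· ≤ ·) (s.support : Set (PIdx m))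

theorem IsStandard.mono {s t : PIdx m →₀ ℕ} (ht : IsStandard t) (h : s ≤ t) : IsStandard s :=
  IsChain.mono (Finset.coe_subset.mpr (Finsupp.support_mono h)) ht

theorem IsStandard.exists_least {s : PIdx m →₀ ℕ} (hs : IsStandard s) (h : s ≠ 0) :
    ∃ p ∈ s.support, ∀ q ∈ s.support, p ≤ q := by
  obtain ⟨p, hp⟩ := s.support.exists_minimal (Finsupp.support_nonempty_iff.mpr h)
  refine ⟨p, hp.1, fun q hq => ?_⟩
  rcases hs.total hp.1 hq with h | h
  exacts [h, hp.2 hq h]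

theorem least_le_of_leadExp_eq {s t : PIdx m →₀ ℕ} (h : leadExp s = leadExp t) {p q : PIdx m}
    (hp : p ∈ s.support) (hq : ∀ r ∈ t.support, q ≤ r) : q ≤ p := by
  obtain ⟨r, hr, hrp⟩ := leadExp_inl_ne_zero.mp (h ▸ leadExp_inl_ne_zero.mpr ⟨p, hp, rfl⟩)
  obtain ⟨r', hr', hrp'⟩ := leadExp_inr_ne_zero.mp (h ▸ leadExp_inr_ne_zero.mpr ⟨p, hp, rfl⟩)
  exact ⟨(hq r hr).1.trans_eq hrp, (hq r' hr').2.trans_eq hrp'⟩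

theorem IsStandard.le_of_leadExp_eq {s t : PIdx m →₀ ℕ} (hs : IsStandard s)
    (ht : IsStandard t) (h : leadExp s = leadExp t) : s ≤ t := by
  have hsub : leadExp (s - t) = leadExp (t - s) := by
    have h1 : s + (t - s) = t + (s - t) := by
      ext p
      simp only [Finsupp.add_apply, Finsupp.tsub_apply]
      omega
    have h2 := congrArg leadExp h1
    rw [map_add, map_add, h] at h2
    exact (add_left_cancel h2).symm
  by_contra hst
  obtain ⟨p, hp, hpl⟩ := (hs.mono tsub_le_self).exists_least
    (fun h0 => hst (tsub_eq_zero_iff_le.mp h0))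
  have hts : t - s ≠ 0 := by
    obtain ⟨r, hr, -⟩ := leadExp_inl_ne_zero.mp (hsub ▸ leadExp_inl_ne_zero.mpr ⟨p, hp, rfl⟩)
    exact Finsupp.support_nonempty_iff.mp ⟨r, hr⟩
  obtain ⟨q, hq, hql⟩ := (ht.mono tsub_le_self).exists_least hts
  obtain rfl : p = q := le_antisymm (least_le_of_leadExp_eq hsub.symm hq hpl)
    (least_le_of_leadExp_eq hsub hp hql)
  simp only [Finsupp.mem_support_iff, Finsupp.tsub_apply] at hp hq
  omega

theorem leadExp_injOn : Set.InjOn leadExp {s : PIdx m →₀ ℕ | IsStandard s} :=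
  fun _ hs _ ht h => (hs.le_of_leadExp_eq ht h).antisymm (ht.le_of_leadExp_eq hs h.symm)

/-- The homomorphism sending each Plücker coordinate to the corresponding minor. -/
noncomputable def toMinors (m : ℕ) : MvPolynomial (PIdx m) ℂ →ₐ[ℂ] MvPolynomial (MatVar m) ℂ :=
  aeval minor

theorem degree_prod_minor_pow (s : PIdx m →₀ ℕ) :
    MonomialOrder.lex.degree (∏ p, minor p ^ s p) = leadExp s := by
  rw [MonomialOrder.degree_prod fun p _ => pow_ne_zero _ (minor_ne_zero p), leadExp,
    Finsupp.weight_apply, Finsupp.sum_fintype _ _ (by simp)]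
  simp [MonomialOrder.degree_pow, degree_minor]

theorem eq_zero_of_toMinors_eq_zero {g : MvPolynomial (PIdx m) ℂ}
    (hg : ∀ s ∈ g.support, IsStandard s) (h : toMinors m g = 0) : g = 0 := by
  by_contra hne
  have hprod : ∀ s : PIdx m →₀ ℕ, ∏ p, minor p ^ s p ≠ 0 := fun s =>
    Finset.prod_ne_zero_iff.mpr fun p _ => pow_ne_zero _ (minor_ne_zero p)
  have hC : ∀ s ∈ g.support, C (σ := MatVar m) (g.coeff s) ≠ 0 := fun s hs =>
    (map_ne_zero_iff _ (C_injective _ _)).mpr (mem_support_iff.mp hs)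
  rw [toMinors, aeval_def, eval₂_eq'] at h
  refine MonomialOrder.lex.sum_ne_zero_of_injOn_degree (support_nonempty.mpr hne)
    (fun s hs => mul_ne_zero (hC s hs) (hprod s)) (fun s hs t ht hst => ?_) h
  refine leadExp_injOn (hg s hs) (hg t ht) ?_
  simpa only [MonomialOrder.degree_mul (hC s hs) (hprod s),
    MonomialOrder.degree_mul (hC t ht) (hprod t), MonomialOrder.degree_C, zero_add,
    degree_prod_minor_pow] using hst

/-- A weight that decreases under straightening. -/
noncomputable def spread : (PIdx m →₀ ℕ) →+ ℕ :=
  Finsupp.weight fun p => (p.1.2.val - p.1.1.val) ^ 2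

theorem straighten_mem {i j k l : Fin m} (hij : i < j) (hjk : j < k) (hkl : k < l)
    (V : Submodule ℂ (MvPolynomial (PIdx m) ℂ))
    (hV : (Ideal.span (pluckerSet m)).restrictScalars ℂ ≤ V) (s : PIdx m →₀ ℕ)
    (h : ∀ t, spread t < spread (Finsupp.single ⟨(i, l), hij.trans (hjk.trans hkl)⟩ 1 +
      Finsupp.single ⟨(j, k), hjk⟩ 1 + s) → monomial t 1 ∈ V) :
    monomial (Finsupp.single ⟨(i, l), hij.trans (hjk.trans hkl)⟩ 1 +
      Finsupp.single ⟨(j, k), hjk⟩ 1 + s) 1 ∈ V := by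
  obtain ⟨a, ha⟩ := Nat.exists_eq_add_of_lt hij
  obtain ⟨b, hb⟩ := Nat.exists_eq_add_of_lt hjk
  obtain ⟨c, hc⟩ := Nat.exists_eq_add_of_lt hkl
  have e1 : l.val - i.val = a + b + c + 3 := by omega
  have e2 : k.val - j.val = b + 1 := by omega
  have e3 : j.val - i.val = a + 1 := by omega
  have e4 : l.val - k.val = c + 1 := by omega
  have e5 : k.val - i.val = a + b + 2 := by omega
  have e6 : l.val - j.val = b + c + 2 := by omega
  have h1 := h (Finsupp.single ⟨(i, j), hij⟩ 1 + Finsupp.single ⟨(k, l), hkl⟩ 1 + s) (by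
    simp only [spread, map_add, Finsupp.weight_single, e1, e2, e3, e4, smul_eq_mul]; nlinarith)
  have h2 := h (Finsupp.single ⟨(i, k), hij.trans hjk⟩ 1 +
      Finsupp.single ⟨(j, l), hjk.trans hkl⟩ 1 + s) (by
    simp only [spread, map_add, Finsupp.weight_single, e1, e2, e5, e6, smul_eq_mul]; nlinarith)
  have h3 := hV (Ideal.mul_mem_left _ (monomial s (1 : ℂ))
    (Ideal.subset_span ⟨i, j, k, l, hij, hjk, hkl, rfl⟩))
  convert V.add_mem (V.sub_mem h3 h1) h2 using 1
  have hm : ∀ p q : PIdx m, monomial (Finsupp.single p 1 + Finsupp.single q 1 + s) (1 : ℂ) =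
      X p * X q * monomial s 1 := fun p q => by simp [X, monomial_mul]
  simp only [hm, Tv]
  ring

theorem monomial_mem_sup (s : PIdx m →₀ ℕ) :
    monomial s (1 : ℂ) ∈ (Ideal.span (pluckerSet m)).restrictScalars ℂ ⊔
      restrictSupport ℂ {s | IsStandard s} := by
  induction hn : spread s using Nat.strong_induction_on generalizing s with
  | _ n ih =>
  subst hn
  by_cases hs : IsStandard s
  · exact Submodule.mem_sup_right (by
      rw [mem_restrictSupport_iff]
      exact (Finset.coe_subset.mpr support_monomial_subset).trans (by simpa using hs))
  · have : ∃ p ∈ s.support, ∃ q ∈ s.support, p.1.1 < q.1.1 ∧ q.1.2 < p.1.2 := by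
      by_contra! hcon
      refine hs fun p hp q hq _ => ?_
      have h1 := hcon p hp q hq
      have h2 := hcon q hq p hp
      change (_ ∧ _) ∨ (_ ∧ _)
      grind
    obtain ⟨p, hp, q, hq, h1, h2⟩ := this
    have hle : Finsupp.single p 1 + Finsupp.single q 1 ≤ s := by
      have hne : p ≠ q := fun h => h1.ne (by rw [h])
      intro r
      simp only [Finsupp.mem_support_iff] at hp hq
      simp only [Finsupp.add_apply, Finsupp.single_apply]
      grind
    obtain ⟨t, rfl⟩ := exists_add_of_le hle
    exact straighten_mem h1 q.2 h2 _ le_sup_left t fun t ht => ih _ ht t rfl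

theorem span_pluckerSet_le_ker : Ideal.span (pluckerSet m) ≤ RingHom.ker (toMinors m) := by
  rw [Ideal.span_le]
  rintro _ ⟨i, j, k, l, hij, hjk, hkl, rfl⟩
  simp only [SetLike.mem_coe, RingHom.mem_ker, toMinors, Tv, map_add, map_sub, map_mul, aeval_X,
    minor]
  ring

theorem ker_toMinors : RingHom.ker (toMinors m) = Ideal.span (pluckerSet m) := by
  refine le_antisymm (fun f hf => ?_) span_pluckerSet_le_ker
  have hf' : f ∈ (Ideal.span (pluckerSet m)).restrictScalars ℂ ⊔
      restrictSupport ℂ {s | IsStandard s} := by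
    rw [f.as_sum]
    refine Submodule.sum_mem _ fun s _ => ?_
    rw [← mul_one (coeff s f), ← smul_eq_mul, ← smul_monomial]
    exact Submodule.smul_mem _ _ (monomial_mem_sup s)
  obtain ⟨a, ha, g, hg, rfl⟩ := Submodule.mem_sup.mp hf'
  have ha' : toMinors m a = 0 := span_pluckerSet_le_ker ha
  rw [RingHom.mem_ker, map_add, ha', zero_add] at hf
  obtain rfl : g = 0 := eq_zero_of_toMinors_eq_zero hg hf
  rwa [add_zero]

/-- The embedding of the coordinate ring of `G(2,m)` into a polynomial ring. -/
noncomputable def grToMinors (m : ℕ) : GrRing m →ₐ[ℂ] MvPolynomial (MatVar m) ℂ :=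
  Ideal.Quotient.liftₐ _ (toMinors m) fun _ ha => span_pluckerSet_le_ker ha

theorem grToMinors_injective (m : ℕ) : Function.Injective (grToMinors m) := by
  rw [injective_iff_map_eq_zero]
  intro a ha
  obtain ⟨f, rfl⟩ := Ideal.Quotient.mk_surjective a
  rw [Ideal.Quotient.eq_zero_iff_mem, ← ker_toMinors]
  exact ha

theorem isDomain_tensorProduct_grRing (a b : ℕ) :
    IsDomain (TensorProduct ℂ (GrRing a) (GrRing b)) := by
  have hinj : Function.Injective
      (Algebra.TensorProduct.map (grToMinors a) (grToMinors b)) :=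
    TensorProduct.map_injective_of_flat_flat (grToMinors a).toLinearMap
      (grToMinors b).toLinearMap (grToMinors_injective a) (grToMinors_injective b)
  let e := algebraTensorAlgEquiv (σ := MatVar b) ℂ (MvPolynomial (MatVar a) ℂ)
  exact (e.injective.comp hinj).isDomain (e.toRingEquiv.toRingHom.comp
    (Algebra.TensorProduct.map (grToMinors a) (grToMinors b)).toRingHom)

end Plucker

namespace Plucker

variable {c d : ℕ}

/-- The renaming of the variables of `B` as Plücker coordinates of `G(2,c+1)` and `G(2,d+1)`. -/
def splitVar (c d : ℕ) : BVar c (c + d) → PIdx (c + 1) ⊕ PIdx (d + 1)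
  | .inl ⟨⟨(i, j), hij⟩, h⟩ =>
    if hj : j.val < c then
      .inl ⟨(⟨i, by have : i.val < j.val := hij; omega⟩, ⟨j, by omega⟩), hij⟩
    else
      .inr ⟨(⟨i - c + 1, by omega⟩, ⟨j - c + 1, by omega⟩), by
        have : i.val < j.val := hij
        simp only at h
        simp only [Fin.mk_lt_mk]
        omega⟩
  | .inr k =>
    if hk : k.val < c then
      .inl ⟨(⟨k, by omega⟩, Fin.last c), Fin.mk_lt_mk.mpr hk⟩
    else
      .inr ⟨(0, ⟨k - c + 1, by omega⟩), Nat.succ_pos _⟩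

/-- The inverse of `splitVar`. -/
def mergeVar (c d : ℕ) : PIdx (c + 1) ⊕ PIdx (d + 1) → BVar c (c + d)
  | .inl ⟨(i, j), hij⟩ =>
    if hj : j.val < c then
      .inl ⟨⟨(⟨i, by have : i.val < j.val := hij; omega⟩, ⟨j, by omega⟩), hij⟩, .inl hj⟩
    else
      .inr ⟨i, by have : i.val < j.val := hij; omega⟩
  | .inr ⟨(i, j), hij⟩ =>
    if hi : i.val = 0 then
      .inr ⟨c + (j - 1), by have : i.val < j.val := hij; omega⟩
    else
      .inl ⟨⟨(⟨c + (i - 1), by omega⟩, ⟨c + (j - 1), by omega⟩), by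
        have : i.val < j.val := hij
        simp only [Fin.mk_lt_mk]
        omega⟩, .inr (Nat.le_add_right _ _)⟩

theorem mergeVar_splitVar (v : BVar c (c + d)) : mergeVar c d (splitVar c d v) = v := by
  rcases v with ⟨⟨⟨i, j⟩, hij⟩, h⟩ | k
  · by_cases hj : j.val < c
    · simp [splitVar, mergeVar, hj]
    · have : i.val < j.val := hij
      simp only at h
      simp only [splitVar, mergeVar, hj, dite_false, Nat.add_eq_zero_iff, one_ne_zero, and_false,
        Nat.add_sub_cancel]
      congr 4 <;> ext <;> simp only <;> omega
  · by_cases hk : k.val < c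
    · simp [splitVar, mergeVar, hk]
    · simp only [splitVar, mergeVar, hk, dite_false, Fin.val_zero, dite_true, Nat.add_sub_cancel]
      congr 1
      ext
      simp only
      omega

theorem splitVar_mergeVar (v : PIdx (c + 1) ⊕ PIdx (d + 1)) :
    splitVar c d (mergeVar c d v) = v := by
  rcases v with ⟨⟨i, j⟩, hij⟩ | ⟨⟨i, j⟩, hij⟩
  · have : i.val < j.val := hij
    by_cases hj : j.val < c
    · simp [splitVar, mergeVar, hj]
    · have hi : i.val < c := by omega
      simp only [splitVar, mergeVar, hj, hi, dite_false, dite_true]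
      congr 3
      ext
      simp only [Fin.val_last]
      omega
  · have : i.val < j.val := hij
    by_cases hi : i.val = 0
    · simp only [splitVar, mergeVar, hi, dite_true, Nat.not_lt.mpr (Nat.le_add_right _ _),
        dite_false]
      congr 3 <;> ext <;> simp only [Fin.val_zero] <;> omega
    · simp only [splitVar, mergeVar, hi, Nat.not_lt.mpr (Nat.le_add_right _ _),
        dite_false]
      congr 3 <;> ext <;> simp only <;> omega

open Algebra.TensorProduct in
/-- The Plücker coordinates as elements of the tensor product. -/
noncomputable def tensorCoord (c d : ℕ) :
    PIdx (c + 1) ⊕ PIdx (d + 1) → TensorProduct ℂ (GrRing (c + 1)) (GrRing (d + 1)) :=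
  Sum.elim (fun p => (includeLeft : _ →ₐ[ℂ] _) (Ideal.Quotient.mk _ (X p)))
    (fun p => (includeRight : _ →ₐ[ℂ] _) (Ideal.Quotient.mk _ (X p)))

theorem mk_plucker_rel {m : ℕ} {i j k l : Fin m} (hij : i < j) (hjk : j < k) (hkl : k < l) :
    (Ideal.Quotient.mkₐ ℂ (Ideal.span (pluckerSet m))) (X ⟨(i, j), hij⟩ * X ⟨(k, l), hkl⟩ -
      X ⟨(i, k), hij.trans hjk⟩ * X ⟨(j, l), hjk.trans hkl⟩ +
      X ⟨(i, l), hij.trans (hjk.trans hkl)⟩ * X ⟨(j, k), hjk⟩) = 0 :=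
  Ideal.Quotient.eq_zero_iff_mem.mpr (Ideal.subset_span ⟨i, j, k, l, hij, hjk, hkl, rfl⟩)

open Algebra.TensorProduct in
theorem tensorCoord_inl_rel {i j k l : Fin (c + 1)} (hij : i < j) (hjk : j < k) (hkl : k < l) :
    tensorCoord c d (.inl ⟨(i, j), hij⟩) * tensorCoord c d (.inl ⟨(k, l), hkl⟩) -
      tensorCoord c d (.inl ⟨(i, k), hij.trans hjk⟩) *
        tensorCoord c d (.inl ⟨(j, l), hjk.trans hkl⟩) +
      tensorCoord c d (.inl ⟨(i, l), hij.trans (hjk.trans hkl)⟩) *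
        tensorCoord c d (.inl ⟨(j, k), hjk⟩) = 0 := by
  have h := congrArg (includeLeft : GrRing (c + 1) →ₐ[ℂ]
    TensorProduct ℂ (GrRing (c + 1)) (GrRing (d + 1))) (mk_plucker_rel hij hjk hkl)
  simp only [map_add, map_sub, map_mul, map_zero] at h
  exact h

open Algebra.TensorProduct in
theorem tensorCoord_inr_rel {i j k l : Fin (d + 1)} (hij : i < j) (hjk : j < k) (hkl : k < l) :
    tensorCoord c d (.inr ⟨(i, j), hij⟩) * tensorCoord c d (.inr ⟨(k, l), hkl⟩) -
      tensorCoord c d (.inr ⟨(i, k), hij.trans hjk⟩) *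
        tensorCoord c d (.inr ⟨(j, l), hjk.trans hkl⟩) +
      tensorCoord c d (.inr ⟨(i, l), hij.trans (hjk.trans hkl)⟩) *
        tensorCoord c d (.inr ⟨(j, k), hjk⟩) = 0 := by
  have h := congrArg (includeRight : GrRing (d + 1) →ₐ[ℂ]
    TensorProduct ℂ (GrRing (c + 1)) (GrRing (d + 1))) (mk_plucker_rel hij hjk hkl)
  simp only [map_add, map_sub, map_mul, map_zero] at h
  exact h

theorem aeval_tensorCoord_relSet {P : MvPolynomial (BVar c (c + d)) ℂ}
    (hP : P ∈ relSet c (c + d)) : aeval (tensorCoord c d ∘ splitVar c d) P = 0 := by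
  rcases hP with ⟨i, j, k, l, hij, hjk, hkl, h, rfl⟩ | ⟨i, j, k, hij, hjk, h, rfl⟩ |
    ⟨j, k, l, hjk, hkl, h, rfl⟩ | ⟨i, j, k, l, hij, hjk, hkl, h, rfl⟩
  · have h1 := Fin.lt_def.mp hij
    have h2 := Fin.lt_def.mp hjk
    have h3 := Fin.lt_def.mp hkl
    have hk : k.val < c := by omega
    have hj : j.val < c := by omega
    simp only [map_add, map_sub, map_mul, SP, aeval_X, Function.comp_apply, splitVar, h, hk, hj,
      dite_true]
    exact tensorCoord_inl_rel (i := ⟨i, by omega⟩) (j := ⟨j, by omega⟩) (k := ⟨k, by omega⟩)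
      (l := ⟨l, by omega⟩) h1 h2 h3
  · have h1 := Fin.lt_def.mp hij
    have h2 := Fin.lt_def.mp hjk
    have hj : j.val < c := by omega
    have hi : i.val < c := by omega
    simp only [map_add, map_sub, map_mul, SP, S1, aeval_X, Function.comp_apply, splitVar, h, hi,
      hj, dite_true]
    exact tensorCoord_inl_rel (i := ⟨i, by omega⟩) (j := ⟨j, by omega⟩) (k := ⟨k, by omega⟩)
      (l := Fin.last c) h1 h2 h
  · have h1 := Fin.lt_def.mp hjk
    have h2 := Fin.lt_def.mp hkl
    have hj : ¬ j.val < c := by omega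
    have hk : ¬ k.val < c := by omega
    have hl : ¬ l.val < c := by omega
    simp only [map_add, map_sub, map_mul, SP, S1, aeval_X, Function.comp_apply, splitVar, hj, hk,
      hl, dite_false]
    exact tensorCoord_inr_rel (i := 0) (j := ⟨j - c + 1, by omega⟩) (k := ⟨k - c + 1, by omega⟩)
      (l := ⟨l - c + 1, by omega⟩) (Nat.succ_pos _) (Fin.mk_lt_mk.mpr (by omega))
      (Fin.mk_lt_mk.mpr (by omega))
  · have h1 := Fin.lt_def.mp hij
    have h2 := Fin.lt_def.mp hjk
    have h3 := Fin.lt_def.mp hkl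
    have hj : ¬ j.val < c := by omega
    have hk : ¬ k.val < c := by omega
    have hl : ¬ l.val < c := by omega
    simp only [map_add, map_sub, map_mul, SP, aeval_X, Function.comp_apply, splitVar, hj, hk,
      hl, dite_false]
    exact tensorCoord_inr_rel (i := ⟨i - c + 1, by omega⟩) (j := ⟨j - c + 1, by omega⟩)
      (k := ⟨k - c + 1, by omega⟩) (l := ⟨l - c + 1, by omega⟩) (Fin.mk_lt_mk.mpr (by omega))
      (Fin.mk_lt_mk.mpr (by omega)) (Fin.mk_lt_mk.mpr (by omega))

/-- The quotient ring `B / 𝔟`. -/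
noncomputable abbrev RelRing (c d : ℕ) :=
  MvPolynomial (BVar c (c + d)) ℂ ⧸ Ideal.span (relSet c (c + d))

/-- The map from `B / 𝔟` to the tensor product of Grassmannian coordinate rings. -/
noncomputable def toTensor (c d : ℕ) :
    RelRing c d →ₐ[ℂ] TensorProduct ℂ (GrRing (c + 1)) (GrRing (d + 1)) :=
  Ideal.Quotient.liftₐ _ (aeval (tensorCoord c d ∘ splitVar c d)) fun _ ha =>
    (Ideal.span_le (I := RingHom.ker (aeval (R := ℂ) (tensorCoord c d ∘ splitVar c d)))).mpr
      (fun _ hP => aeval_tensorCoord_relSet hP) ha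

/-- The class in `B / 𝔟` of the variable corresponding to a Plücker coordinate. -/
noncomputable def relCoord (c d : ℕ) (v : PIdx (c + 1) ⊕ PIdx (d + 1)) : RelRing c d :=
  Ideal.Quotient.mkₐ ℂ _ (X (mergeVar c d v))

theorem aeval_relCoord_inl {P : MvPolynomial (PIdx (c + 1)) ℂ} (hP : P ∈ pluckerSet (c + 1)) :
    aeval (fun p => relCoord c d (.inl p)) P = 0 := by
  obtain ⟨i, j, k, l, hij, hjk, hkl, rfl⟩ := hP
  have h1 := Fin.lt_def.mp hij
  have h2 := Fin.lt_def.mp hjk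
  have h3 := Fin.lt_def.mp hkl
  have hj : j.val < c := by omega
  have hk : k.val < c := by omega
  simp only [map_add, map_sub, map_mul, Tv, aeval_X, relCoord]
  simp only [← map_mul, ← map_sub, ← map_add]
  refine Ideal.Quotient.eq_zero_iff_mem.mpr (Ideal.subset_span ?_)
  by_cases hl : l.val < c
  · simp only [mergeVar, hj, hk, hl, dite_true]
    exact .inl ⟨⟨i, by omega⟩, ⟨j, by omega⟩, ⟨k, by omega⟩, ⟨l, by omega⟩, h1, h2, h3, hl, rfl⟩
  · simp only [mergeVar, hj, hk, hl, dite_true, dite_false]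
    exact .inr (.inl ⟨⟨i, by omega⟩, ⟨j, by omega⟩, ⟨k, by omega⟩, h1, h2, hk, rfl⟩)

theorem aeval_relCoord_inr {P : MvPolynomial (PIdx (d + 1)) ℂ} (hP : P ∈ pluckerSet (d + 1)) :
    aeval (fun p => relCoord c d (.inr p)) P = 0 := by
  obtain ⟨i, j, k, l, hij, hjk, hkl, rfl⟩ := hP
  have h1 := Fin.lt_def.mp hij
  have h2 := Fin.lt_def.mp hjk
  have h3 := Fin.lt_def.mp hkl
  have hj : j.val ≠ 0 := by omega
  have hk : k.val ≠ 0 := by omega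
  simp only [map_add, map_sub, map_mul, Tv, aeval_X, relCoord]
  simp only [← map_mul, ← map_sub, ← map_add]
  refine Ideal.Quotient.eq_zero_iff_mem.mpr (Ideal.subset_span ?_)
  by_cases hi : i.val = 0
  · simp only [mergeVar, hj, hk, hi, dite_true, dite_false]
    exact .inr (.inr (.inl ⟨⟨c + (j - 1), by omega⟩, ⟨c + (k - 1), by omega⟩,
      ⟨c + (l - 1), by omega⟩, Fin.mk_lt_mk.mpr (by omega), Fin.mk_lt_mk.mpr (by omega),
      Nat.le_add_right _ _, rfl⟩))
  · simp only [mergeVar, hj, hk, hi, dite_false]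
    exact .inr (.inr (.inr ⟨⟨c + (i - 1), by omega⟩, ⟨c + (j - 1), by omega⟩,
      ⟨c + (k - 1), by omega⟩, ⟨c + (l - 1), by omega⟩, Fin.mk_lt_mk.mpr (by omega),
      Fin.mk_lt_mk.mpr (by omega), Fin.mk_lt_mk.mpr (by omega), Nat.le_add_right _ _, rfl⟩))

/-- The map from the tensor product of Grassmannian coordinate rings to `B / 𝔟`. -/
noncomputable def ofTensor (c d : ℕ) :
    TensorProduct ℂ (GrRing (c + 1)) (GrRing (d + 1)) →ₐ[ℂ] RelRing c d :=
  Algebra.TensorProduct.lift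
    (Ideal.Quotient.liftₐ _ (aeval fun p => relCoord c d (.inl p)) fun _ ha =>
      (Ideal.span_le (I := RingHom.ker (aeval (R := ℂ) fun p => relCoord c d (.inl p)))).mpr
        (fun _ hP => aeval_relCoord_inl hP) ha)
    (Ideal.Quotient.liftₐ _ (aeval fun p => relCoord c d (.inr p)) fun _ ha =>
      (Ideal.span_le (I := RingHom.ker (aeval (R := ℂ) fun p => relCoord c d (.inr p)))).mpr
        (fun _ hP => aeval_relCoord_inr hP) ha)
    fun _ _ => Commute.all _ _

theorem toTensor_relCoord (v : PIdx (c + 1) ⊕ PIdx (d + 1)) :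
    toTensor c d (relCoord c d v) = tensorCoord c d v := by
  refine (aeval_X _ _).trans ?_
  rw [Function.comp_apply, splitVar_mergeVar]

theorem ofTensor_tensorCoord (v : PIdx (c + 1) ⊕ PIdx (d + 1)) :
    ofTensor c d (tensorCoord c d v) = relCoord c d v := by
  rcases v with p | p
  · refine (Algebra.TensorProduct.lift_tmul _ _ _ _ _).trans ?_
    rw [map_one, mul_one]
    exact aeval_X _ _
  · refine (Algebra.TensorProduct.lift_tmul _ _ _ _ _).trans ?_
    rw [map_one, one_mul]
    exact aeval_X _ _

/-- The isomorphism of `B / 𝔟` with the tensor product of the coordinate rings of `G(2,c+1)` and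
`G(2,d+1)`. -/
noncomputable def relRingEquiv (c d : ℕ) :
    RelRing c d ≃ₐ[ℂ] TensorProduct ℂ (GrRing (c + 1)) (GrRing (d + 1)) :=
  AlgEquiv.ofAlgHom (toTensor c d) (ofTensor c d)
    (by
      refine Algebra.TensorProduct.ext (Ideal.Quotient.algHom_ext _ (algHom_ext fun p => ?_))
        (Ideal.Quotient.algHom_ext _ (algHom_ext fun p => ?_))
      · exact (congrArg (toTensor c d) (ofTensor_tensorCoord (.inl p))).trans
          (toTensor_relCoord (.inl p))
      · exact (congrArg (toTensor c d) (ofTensor_tensorCoord (.inr p))).trans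
          (toTensor_relCoord (.inr p)))
    (by
      refine Ideal.Quotient.algHom_ext _ (algHom_ext fun v => ?_)
      have h := (congrArg (ofTensor c d) (toTensor_relCoord (splitVar c d v))).trans
        (ofTensor_tensorCoord (splitVar c d v))
      rwa [relCoord, mergeVar_splitVar] at h)

end Plucker

/-- For `c, d > 2` and `n = c + d`, the ring `ℂ[S]/𝔟` is isomorphic (as a `ℂ`-algebra)
to the tensor product over `ℂ` of the homogeneous coordinate rings of `G(2,c+1)` and
`G(2,d+1)`; in particular it is an integral domain. -/
theorem stmt_18 (c d : ℕ) (hc : 2 < c) (hd : 2 < d) :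
    Nonempty ((MvPolynomial (BVar c (c + d)) ℂ ⧸ Ideal.span (relSet c (c + d)))
        ≃ₐ[ℂ] TensorProduct ℂ (GrRing (c + 1)) (GrRing (d + 1))) ∧
      IsDomain (MvPolynomial (BVar c (c + d)) ℂ ⧸ Ideal.span (relSet c (c + d))) := by
  have := Plucker.isDomain_tensorProduct_grRing (c + 1) (d + 1)
  exact ⟨⟨Plucker.relRingEquiv c d⟩, (Plucker.relRingEquiv c d).toMulEquiv.isDomain _⟩
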